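/- Let p be an odd prime and w ∈ V_5. Suppose there is no nonzero linear form ℓ over 𝔽_p with ℓ² apolar to w, and suppose there exists a nonzero binary quadratic form q over 𝔽_p apolar to w with Disc(q) ≠ 0 (so w has Waring type ⟨1,1⟩ or ⟨2⟩). Then S(w) = −χ(Disc(q))·p²; in particular S(w) = −p² if q splits into two non-proportional linear factors over 𝔽_p, and S(w) = p² if q is irreducible over 𝔽_p. -/

import Mathlib

open Finset

/-- Multiplication of binary forms encoded by coefficient tuples: a binary form
`∑ i, f i • x^(a-i) * y^i` of degree `a` is encoded as the tuple `f : Fin (a+1) → k`,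
and multiplication of forms is convolution of coefficient tuples. -/
def formMul {k : Type*} [CommRing k] {a b : ℕ} (f : Fin (a + 1) → k)
    (g : Fin (b + 1) → k) : Fin (a + b + 1) → k :=
  fun i => ∑ q : Fin (a + 1) × Fin (b + 1),
    if (q.1 : ℕ) + (q.2 : ℕ) = (i : ℕ) then f q.1 * g q.2 else 0

/-- The pairing `(w, v) = ∑ i, w i * v i` between `V_n` and `V_n^*`. -/
def pair {k : Type*} [CommRing k] {n : ℕ} (w v : Fin (n + 1) → k) : k :=
  ∑ i, w i * v i

/-- A binary quintic form is singular if it is nonzero and, over an algebraic closure,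
it is divisible by the square of a nonzero linear form. -/
def IsSingularQuintic {k : Type*} [Field k] (v : Fin 6 → k) : Prop :=
  v ≠ 0 ∧ ∃ (l : Fin 2 → AlgebraicClosure k) (c : Fin 4 → AlgebraicClosure k),
    l ≠ 0 ∧
    (fun i => algebraMap k (AlgebraicClosure k) (v i)) = formMul (formMul l l) c

open scoped Classical in
/-- The exponential sum `S(w)` over binary quintic forms that are zero or singular. -/
noncomputable def expSum (p : ℕ) [Fact p.Prime] (w : Fin 6 → ZMod p) : ℂ :=
  ∑ v : Fin 6 → ZMod p,
    if v = 0 ∨ IsSingularQuintic v then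
      Complex.exp (2 * Real.pi * Complex.I * ((pair w v).val : ℂ) / (p : ℂ))
    else 0

/-- The discriminant of a binary quadratic form `f₀x² + f₁xy + f₂y²`. -/
def disc {k : Type*} [CommRing k] (f : Fin 3 → k) : k := f 1 ^ 2 - 4 * f 0 * f 2

/-!
A nonzero form `v` has a greatest square divisor `r²`: a form `r` such that `f² ∣ v` if and only
if `f ∣ r`, for all binary forms `f`; over a finite field a quintic `v` is singular exactly when
`deg r ≥ 1`, and `deg r ≤ 2`. With `Q` the order of the field, counting divisors of `r` gives
`#{l linear : l² ∣ v} - ∑_{D quadratic, D² ∣ v} χ(Disc D) = (Q - 1) · [v singular]`, because a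
quadratic form `f ≠ 0` has `(Q - 1)(1 + χ(Disc f))` linear divisors. For `v = 0` the same identity
holds with the linear form `0` left out.

Multiplying by `ψ((w, v))` and summing over `v` gives `(Q - 1) S(w)`, where the multiples of a form
`f` of degree `a` contribute `Q ^ (6 - a)` if `f` is apolar to `w` and `0` otherwise. The terms of
linear forms vanish, since no `l²` is apolar to `w`. The quartics apolar to `w` are then exactly the
multiples of `q`, by a dimension count, so `D²` is apolar to `w` only for the `Q - 1` nonzero scalar
multiples `D` of `q`, each of which contributes `-χ(Disc q) Q²`.
-/

open Polynomial

section Dehomogenization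

variable {k : Type*} [CommRing k] {a b c n : ℕ}

/-- The dehomogenization `f(1, X)` of a binary form `f` of degree `n`. It forgets the degree of
`f`, and `n - natDegree (dehomog f)` is the order of vanishing of `f` along the form `x`. -/
noncomputable def dehomog : (Fin (n + 1) → k) →ₗ[k] k[X] :=
  (degreeLT k (n + 1)).subtype ∘ₗ (degreeLTEquiv k (n + 1)).symm.toLinearMap

theorem dehomog_eq_sum (f : Fin (n + 1) → k) :
    dehomog f = ∑ i : Fin (n + 1), monomial (i : ℕ) (f i) :=
  rfl

theorem coeff_dehomog (f : Fin (n + 1) → k) (i : Fin (n + 1)) : (dehomog f).coeff i = f i :=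
  congrFun ((degreeLTEquiv k (n + 1)).apply_symm_apply f) i

theorem natDegree_dehomog_le (f : Fin (n + 1) → k) : (dehomog f).natDegree ≤ n :=
  natDegree_le_iff_coeff_eq_zero.mpr fun i hi => coeff_eq_zero_of_degree_lt <|
    (mem_degreeLT.mp ((degreeLTEquiv k (n + 1)).symm f).2).trans_le (by exact_mod_cast hi)

theorem dehomog_injective : Function.Injective (dehomog : (Fin (n + 1) → k) →ₗ[k] k[X]) :=
  Subtype.val_injective.comp (degreeLTEquiv k (n + 1)).symm.injective

theorem dehomog_eq_zero_iff {f : Fin (n + 1) → k} : dehomog f = 0 ↔ f = 0 :=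
  map_eq_zero_iff _ dehomog_injective

theorem dehomog_toFn {P : k[X]} (hP : P.natDegree ≤ n) : dehomog (toFn (n + 1) P) = P := by
  ext i
  rcases lt_or_ge i (n + 1) with hi | hi
  · exact coeff_dehomog (toFn (n + 1) P) ⟨i, hi⟩
  · rw [coeff_eq_zero_of_natDegree_lt (by have := natDegree_dehomog_le (toFn (n + 1) P); omega),
      coeff_eq_zero_of_natDegree_lt (by omega)]

theorem dehomog_formMul (f : Fin (a + 1) → k) (g : Fin (b + 1) → k) :
    dehomog (formMul f g) = dehomog f * dehomog g := by
  simp only [dehomog_eq_sum, sum_mul_sum, monomial_mul_monomial, formMul, map_sum]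
  rw [sum_comm, Fintype.sum_prod_type]
  refine sum_congr rfl fun i _ => sum_congr rfl fun j _ => ?_
  rw [sum_eq_single (⟨i + j, by omega⟩ : Fin (a + b + 1)), if_pos rfl]
  · exact fun l _ hl => by rw [if_neg fun h => hl (Fin.ext h.symm), map_zero]
  · exact fun h => absurd (mem_univ _) h

theorem dehomog_comp_cast {m : ℕ} (h : m + 1 = n + 1) (f : Fin (n + 1) → k) :
    dehomog (f ∘ Fin.cast h) = dehomog f := by
  obtain rfl : m = n := by omega
  rfl

theorem formMul_assoc (f : Fin (a + 1) → k) (g : Fin (b + 1) → k) (h : Fin (c + 1) → k) :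
    formMul (formMul f g) h = formMul f (formMul g h) ∘ Fin.cast (by omega) :=
  dehomog_injective <| by simp only [dehomog_comp_cast, dehomog_formMul, mul_assoc]

theorem formMul_comm (f : Fin (a + 1) → k) (g : Fin (b + 1) → k) :
    formMul f g = formMul g f ∘ Fin.cast (by omega) :=
  dehomog_injective <| by simp only [dehomog_comp_cast, dehomog_formMul, mul_comm]

theorem formMul_right_comm (f : Fin (a + 1) → k) (g : Fin (b + 1) → k) (h : Fin (c + 1) → k) :
    formMul (formMul f g) h = formMul (formMul f h) g ∘ Fin.cast (by omega) :=
  dehomog_injective <| by simp only [dehomog_comp_cast, dehomog_formMul, mul_right_comm]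

/-- Multiplication of binary forms as a bilinear map. -/
def formMulBilin (a b : ℕ) :
    (Fin (a + 1) → k) →ₗ[k] (Fin (b + 1) → k) →ₗ[k] (Fin (a + b + 1) → k) :=
  LinearMap.mk₂ k formMul
    (fun _ _ _ => dehomog_injective <| by simp only [dehomog_formMul, map_add, add_mul])
    (fun _ _ _ => dehomog_injective <| by simp only [dehomog_formMul, map_smul, smul_mul_assoc])
    (fun _ _ _ => dehomog_injective <| by simp only [dehomog_formMul, map_add, mul_add])
    (fun _ _ _ => dehomog_injective <| by simp only [dehomog_formMul, map_smul, mul_smul_comm])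

theorem formMulBilin_injective [IsDomain k] {f : Fin (a + 1) → k} (hf : f ≠ 0) :
    Function.Injective (formMulBilin a b f) := fun g h hgh => by
  have hP : dehomog f * dehomog g = dehomog f * dehomog h := by
    rw [← dehomog_formMul, ← dehomog_formMul]
    exact congrArg dehomog hgh
  exact dehomog_injective (mul_left_cancel₀ (dehomog_eq_zero_iff.not.mpr hf) hP)

theorem formMul_ne_zero_iff [IsDomain k] {f : Fin (a + 1) → k} {g : Fin (b + 1) → k} :
    formMul f g ≠ 0 ↔ f ≠ 0 ∧ g ≠ 0 := by
  rw [← dehomog_eq_zero_iff.ne, dehomog_formMul, mul_ne_zero_iff, dehomog_eq_zero_iff.ne,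
    dehomog_eq_zero_iff.ne]

theorem map_formMul {K : Type*} [CommRing K] (φ : k →+* K) (f : Fin (a + 1) → k)
    (g : Fin (b + 1) → k) : φ ∘ formMul f g = formMul (φ ∘ f) (φ ∘ g) := by
  funext i
  simp only [formMul, Function.comp_apply, map_sum, apply_ite φ, map_mul, map_zero]

theorem dehomog_map {K : Type*} [CommRing K] (φ : k →+* K) (f : Fin (n + 1) → k) :
    dehomog (φ ∘ f) = (dehomog f).map φ := by
  simp only [dehomog_eq_sum, Polynomial.map_sum, map_monomial, Function.comp_apply]

end Dehomogenization

section Divisibility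

variable {k : Type*} [Field k] {a b n : ℕ}

/-- The binary form `f` of degree `a` divides the binary form `g` of degree `n`. The cast
identifies the coefficient tuples of forms of degree `n` and of degree `a + b`. -/
def FormDvd (f : Fin (a + 1) → k) (g : Fin (n + 1) → k) : Prop :=
  ∃ (b : ℕ) (h : n + 1 = a + b + 1) (c : Fin (b + 1) → k), g = formMul f c ∘ Fin.cast h

theorem formDvd_iff_exists_eq_formMul {f : Fin (a + 1) → k} {g : Fin (a + b + 1) → k} :
    FormDvd f g ↔ ∃ c : Fin (b + 1) → k, g = formMul f c := by
  refine ⟨?_, fun ⟨c, hc⟩ => ⟨b, rfl, c, hc⟩⟩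
  rintro ⟨b', h, c, hc⟩
  obtain rfl : b = b' := by omega
  exact ⟨c, hc⟩

theorem FormDvd.le {f : Fin (a + 1) → k} {g : Fin (n + 1) → k} (h : FormDvd f g) : a ≤ n := by
  obtain ⟨b, hb, -⟩ := h
  omega

-- The degree condition says that `g` vanishes along the form `x` to at least the order of `f`.
theorem formDvd_iff_dehomog_dvd {f : Fin (a + 1) → k} {g : Fin (n + 1) → k} (hg : g ≠ 0) :
    FormDvd f g ↔ dehomog f ∣ dehomog g ∧
      a + (dehomog g).natDegree ≤ n + (dehomog f).natDegree := by
  have hg' : dehomog g ≠ 0 := dehomog_eq_zero_iff.not.mpr hg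
  constructor
  · rintro ⟨b, hb, c, rfl⟩
    rw [dehomog_comp_cast, dehomog_formMul] at hg' ⊢
    rw [natDegree_mul (left_ne_zero_of_mul hg') (right_ne_zero_of_mul hg')]
    exact ⟨dvd_mul_right _ _, by have := natDegree_dehomog_le c; omega⟩
  · rintro ⟨⟨Q, hQ⟩, hdeg⟩
    rw [hQ] at hg'
    rw [hQ, natDegree_mul (left_ne_zero_of_mul hg') (right_ne_zero_of_mul hg')] at hdeg
    have := natDegree_dehomog_le f
    refine ⟨n - a, by omega, toFn (n - a + 1) Q, dehomog_injective ?_⟩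
    rw [dehomog_comp_cast, dehomog_formMul, dehomog_toFn (by omega), hQ]

theorem formDvd_formMul_left (f : Fin (a + 1) → k) (g : Fin (b + 1) → k) :
    FormDvd f (formMul f g) :=
  ⟨b, rfl, g, rfl⟩

theorem formDvd_formMul_right (f : Fin (a + 1) → k) (g : Fin (b + 1) → k) :
    FormDvd g (formMul f g) :=
  ⟨a, by omega, f, formMul_comm f g⟩

theorem formDvd_zero_right (f : Fin (a + 1) → k) (han : a ≤ n) :
    FormDvd f (0 : Fin (n + 1) → k) :=
  ⟨n - a, by omega, 0, dehomog_injective <| by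
    rw [dehomog_comp_cast, dehomog_formMul, map_zero, map_zero, mul_zero]⟩

theorem FormDvd.ne_zero {f : Fin (a + 1) → k} {g : Fin (n + 1) → k} (h : FormDvd f g)
    (hg : g ≠ 0) : f ≠ 0 := by
  rintro rfl
  have hdvd := ((formDvd_iff_dehomog_dvd hg).mp h).1
  rw [map_zero, zero_dvd_iff, dehomog_eq_zero_iff] at hdvd
  exact hg hdvd

theorem FormDvd.trans {f : Fin (a + 1) → k} {g : Fin (b + 1) → k} {h : Fin (n + 1) → k}
    (hfg : FormDvd f g) (hgh : FormDvd g h) : FormDvd f h := by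
  obtain ⟨c, hc, r, rfl⟩ := hfg
  obtain ⟨d, hd, s, rfl⟩ := hgh
  refine ⟨c + d, by omega, formMul r s, dehomog_injective ?_⟩
  simp only [dehomog_comp_cast, dehomog_formMul, mul_assoc]

theorem formDvd_iff_exists_smul {f g : Fin (n + 1) → k} :
    FormDvd f g ↔ ∃ c : k, g = c • f := by
  have hconst (e : Fin 1 → k) : formMul f e = e 0 • f := dehomog_injective <|
    (dehomog_formMul f e).trans <| by
      rw [map_smul, smul_eq_C_mul, mul_comm, dehomog_eq_sum e, Fin.sum_univ_one, Fin.val_zero,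
        monomial_zero_left]
  rw [formDvd_iff_exists_eq_formMul (b := 0)]
  exact ⟨fun ⟨e, he⟩ => ⟨e 0, he.trans (hconst e)⟩,
    fun ⟨c, hc⟩ => ⟨fun _ => c, hc.trans (hconst fun _ => c).symm⟩⟩

theorem formDvd_refl (f : Fin (n + 1) → k) : FormDvd f f :=
  formDvd_iff_exists_smul.mpr ⟨1, (one_smul k f).symm⟩

theorem formDvd_iff_exists_units_smul {f g : Fin (n + 1) → k} (hg : g ≠ 0) :
    FormDvd f g ↔ ∃ c : kˣ, f = c • g := by
  rw [formDvd_iff_exists_smul]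
  constructor
  · rintro ⟨c, rfl⟩
    exact ⟨(Units.mk0 c (left_ne_zero_of_smul hg))⁻¹, (inv_smul_smul (Units.mk0 c _) f).symm⟩
  · rintro ⟨c, rfl⟩
    exact ⟨(c⁻¹ : kˣ), (inv_smul_smul c g).symm⟩

theorem FormDvd.symm {f g : Fin (n + 1) → k} (h : FormDvd f g) (hg : g ≠ 0) : FormDvd g f := by
  obtain ⟨c, rfl⟩ := (formDvd_iff_exists_units_smul hg).mp h
  exact formDvd_iff_exists_smul.mpr ⟨c, rfl⟩

theorem FormDvd.sq_trans {f : Fin (a + 1) → k} {g : Fin (b + 1) → k} {v : Fin (n + 1) → k}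
    (hfg : FormDvd f g) (hgv : FormDvd (formMul g g) v) (hv : v ≠ 0) (hg : g ≠ 0) :
    FormDvd (formMul f f) v := by
  rw [formDvd_iff_dehomog_dvd hv, dehomog_formMul, ← sq, natDegree_pow] at hgv ⊢
  obtain ⟨hdvd, hdeg⟩ := (formDvd_iff_dehomog_dvd hg).mp hfg
  exact ⟨(pow_dvd_pow_of_dvd hdvd 2).trans hgv.1, by omega⟩

theorem FormDvd.map {K : Type*} [Field K] (φ : k →+* K) {f : Fin (a + 1) → k}
    {g : Fin (n + 1) → k} (h : FormDvd f g) : FormDvd (φ ∘ f) (φ ∘ g) := by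
  obtain ⟨b, hb, c, rfl⟩ := h
  exact ⟨b, hb, φ ∘ c, by rw [← map_formMul]; rfl⟩

end Divisibility

section GreatestSquareDivisor

theorem exists_squarefree_mul_sq {R : Type*} [CommMonoidWithZero R] [UniqueFactorizationMonoid R]
    {x : R} (hx : x ≠ 0) : ∃ s r : R, Squarefree s ∧ x = s * r ^ 2 := by
  induction x using UniqueFactorizationMonoid.induction_on_prime with
  | h₁ => exact absurd rfl hx
  | h₂ x hu => exact ⟨x, 1, hu.squarefree, by rw [one_pow, mul_one]⟩
  | h₃ x p hx0 hp ih =>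
    obtain ⟨s, r, hs, rfl⟩ := ih hx0
    by_cases hps : p ∣ s
    · obtain ⟨t, rfl⟩ := hps
      exact ⟨t, p * r, hs.of_mul_right, by rw [mul_pow, sq p]; ac_rfl⟩
    · have hrel : IsRelPrime p s := hp.irreducible.isRelPrime_iff_not_dvd.mpr hps
      exact ⟨p * s, r, squarefree_mul_iff.mpr ⟨hrel, hp.squarefree, hs⟩, (mul_assoc _ _ _).symm⟩

theorem exists_forall_sq_dvd_iff_dvd {R : Type*} [CommMonoidWithZero R]
    [UniqueFactorizationMonoid R] {x : R} (hx : x ≠ 0) : ∃ r : R, ∀ d, d ^ 2 ∣ x ↔ d ∣ r := by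
  obtain ⟨s, r, hs, rfl⟩ := exists_squarefree_mul_sq hx
  refine ⟨r, fun d => ⟨fun h => ?_, fun h => (pow_dvd_pow_of_dvd h 2).mul_left s⟩⟩
  have hr : r ≠ 0 := fun hr => hx (by rw [hr, zero_pow two_ne_zero, mul_zero])
  obtain ⟨r', d', g, hrel, rfl, rfl⟩ := UniqueFactorizationMonoid.exists_reduced_factors r hr d
  have hg : g ^ 2 ≠ 0 := pow_ne_zero 2 (left_ne_zero_of_mul hr)
  rw [mul_pow, mul_pow, mul_left_comm, mul_dvd_mul_iff_left hg] at h
  have hd' : d' ^ 2 ∣ s := (IsRelPrime.pow hrel.symm).dvd_of_dvd_mul_right h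
  exact mul_dvd_mul_left g ((hs d' (sq d' ▸ hd')).dvd)

theorem exists_forall_formMul_self_dvd_iff {k : Type*} [Field k] {n : ℕ} {v : Fin (n + 1) → k}
    (hv : v ≠ 0) : ∃ (d : ℕ) (r : Fin (d + 1) → k), 2 * d ≤ n ∧ r ≠ 0 ∧
      ∀ {a : ℕ} (f : Fin (a + 1) → k), FormDvd (formMul f f) v ↔ FormDvd f r := by
  have hv' : dehomog v ≠ 0 := dehomog_eq_zero_iff.not.mpr hv
  obtain ⟨R, hR⟩ := exists_forall_sq_dvd_iff_dvd hv'
  have hRv : R ^ 2 ∣ dehomog v := (hR R).mpr dvd_rfl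
  have hRdeg := natDegree_le_of_dvd hRv hv'
  rw [natDegree_pow] at hRdeg
  have hvdeg := natDegree_dehomog_le v
  obtain ⟨d, hd⟩ : ∃ d, d = R.natDegree + (n - (dehomog v).natDegree) / 2 := ⟨_, rfl⟩
  have hr : dehomog (toFn (d + 1) R) = R := dehomog_toFn (by omega)
  have hr0 : toFn (d + 1) R ≠ 0 := by
    rw [← dehomog_eq_zero_iff.ne, hr]
    exact ne_zero_of_dvd_ne_zero hv' ((dvd_pow_self R two_ne_zero).trans hRv)
  refine ⟨d, toFn (d + 1) R, by omega, hr0, fun {a} f => ?_⟩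
  rw [formDvd_iff_dehomog_dvd hv, formDvd_iff_dehomog_dvd hr0, dehomog_formMul, ← sq,
    natDegree_pow, hR, hr]
  have := natDegree_dehomog_le f
  exact and_congr_right' (by omega)

end GreatestSquareDivisor

section Singularity

variable {k K : Type*} [Field k] [Field K] {a n : ℕ}

theorem map_comp_ne_zero (φ : k →+* K) {v : Fin (n + 1) → k} (hv : v ≠ 0) : φ ∘ v ≠ 0 := by
  rwa [← dehomog_eq_zero_iff.ne, dehomog_map, Ne, Polynomial.map_eq_zero, dehomog_eq_zero_iff]

theorem dehomog_x : dehomog (![1, 0] : Fin 2 → k) = 1 := by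
  rw [dehomog_eq_sum, Fin.sum_univ_two]
  simp

theorem exists_linear_formDvd [IsAlgClosed K] (ha : 0 < a) {f : Fin (a + 1) → K} (hf : f ≠ 0) :
    ∃ l : Fin 2 → K, l ≠ 0 ∧ FormDvd l f := by
  rcases eq_or_ne (dehomog f).natDegree 0 with hconst | hdeg
  · refine ⟨![1, 0], fun h => one_ne_zero (congrFun h 0), ?_⟩
    rw [formDvd_iff_dehomog_dvd hf, dehomog_x, hconst, natDegree_one]
    exact ⟨one_dvd _, by omega⟩
  · obtain ⟨α, hα⟩ := IsAlgClosed.exists_root (dehomog f) (degree_ne_of_natDegree_ne hdeg)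
    have hl : dehomog (toFn 2 (X - C α)) = X - C α := dehomog_toFn (natDegree_X_sub_C_le α)
    refine ⟨toFn 2 (X - C α), ?_, ?_⟩
    · rw [← dehomog_eq_zero_iff.ne, hl]
      exact X_sub_C_ne_zero α
    · rw [formDvd_iff_dehomog_dvd hf, hl, natDegree_X_sub_C]
      exact ⟨dvd_iff_isRoot.mpr hα, by have := natDegree_dehomog_le f; omega⟩

theorem exists_formMul_self_dvd_of_map [PerfectField k] (φ : k →+* K) {v : Fin (n + 1) → k}
    (hv : v ≠ 0) {l : Fin 2 → K} (h : FormDvd (formMul l l) (φ ∘ v)) :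
    ∃ a > 0, ∃ f : Fin (a + 1) → k, FormDvd (formMul f f) v := by
  have hl := dehomog_eq_zero_iff.not.mpr
    (formMul_ne_zero_iff.mp (h.ne_zero (map_comp_ne_zero φ hv))).1
  rw [formDvd_iff_dehomog_dvd (map_comp_ne_zero φ hv), dehomog_formMul, dehomog_map,
    natDegree_mul hl hl, natDegree_map] at h
  obtain ⟨hdvd, hdeg⟩ := h
  rcases Nat.eq_zero_or_pos (dehomog l).natDegree with hl0 | hlpos
  · refine ⟨1, one_pos, ![1, 0], ?_⟩
    rw [formDvd_iff_dehomog_dvd hv, dehomog_formMul, dehomog_x, mul_one, natDegree_one]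
    exact ⟨one_dvd _, by omega⟩
  · have hv' : ¬ Squarefree (dehomog v) := fun hsq => by
      have hunit := (PerfectField.separable_iff_squarefree.mpr hsq).map (f := φ) |>.squarefree
        (dehomog l) hdvd
      exact hlpos.ne' (natDegree_eq_zero_of_isUnit hunit)
    obtain ⟨D, hD, hDunit⟩ : ∃ D, D * D ∣ dehomog v ∧ ¬ IsUnit D := by
      simpa only [Squarefree, not_forall, exists_prop] using hv'
    have hD0 : D ≠ 0 := left_ne_zero_of_mul (ne_zero_of_dvd_ne_zero
      (dehomog_eq_zero_iff.not.mpr hv) hD)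
    refine ⟨D.natDegree, natDegree_pos_iff_degree_pos.mpr
      (degree_pos_of_ne_zero_of_nonunit hD0 hDunit), toFn (D.natDegree + 1) D, ?_⟩
    rw [formDvd_iff_dehomog_dvd hv, dehomog_formMul, dehomog_toFn le_rfl, natDegree_mul hD0 hD0]
    exact ⟨hD, by have := natDegree_dehomog_le v; omega⟩

theorem isSingularQuintic_iff_exists_formMul_self_dvd [PerfectField k] {v : Fin 6 → k}
    (hv : v ≠ 0) :
    IsSingularQuintic v ↔ ∃ a > 0, ∃ f : Fin (a + 1) → k, FormDvd (formMul f f) v := by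
  constructor
  · rintro ⟨-, l, c, -, hc⟩
    exact exists_formMul_self_dvd_of_map (algebraMap k (AlgebraicClosure k)) hv
      (formDvd_iff_exists_eq_formMul.mpr ⟨c, hc⟩)
  · rintro ⟨a, ha, f, hf⟩
    let φ := algebraMap k (AlgebraicClosure k)
    have hφf : φ ∘ f ≠ 0 := map_comp_ne_zero φ (formMul_ne_zero_iff.mp (hf.ne_zero hv)).1
    obtain ⟨l, hl, hlf⟩ := exists_linear_formDvd ha hφf
    have hφ : FormDvd (formMul (φ ∘ f) (φ ∘ f)) (φ ∘ v) := map_formMul φ f f ▸ hf.map φ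
    have hlv := hlf.sq_trans hφ (map_comp_ne_zero φ hv) hφf
    obtain ⟨c, hc⟩ := (formDvd_iff_exists_eq_formMul (a := 2) (b := 3)).mp hlv
    exact ⟨hv, l, c, hl, hc⟩

end Singularity

section Discriminant

theorem disc_smul {k : Type*} [CommRing k] (c : k) (f : Fin 3 → k) :
    disc (c • f) = c ^ 2 * disc f := by
  simp only [disc, Pi.smul_apply, smul_eq_mul]
  ring

theorem formMul_linear_linear {k : Type*} [CommRing k] (l m : Fin 2 → k) :
    formMul l m = ![l 0 * m 0, l 0 * m 1 + l 1 * m 0, l 1 * m 1] := by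
  ext i
  fin_cases i <;> simp [formMul, Fintype.sum_prod_type]

theorem disc_formMul {k : Type*} [CommRing k] (l m : Fin 2 → k) :
    disc (formMul l m) = (l 0 * m 1 - l 1 * m 0) ^ 2 := by
  simp only [formMul_linear_linear, disc, Matrix.cons_val]
  ring

variable {k : Type*} [Field k]

theorem linear_formDvd_linear_iff {l m : Fin 2 → k} (hl : l ≠ 0) :
    FormDvd l m ↔ l 0 * m 1 = l 1 * m 0 := by
  rw [formDvd_iff_exists_smul]
  constructor
  · rintro ⟨c, rfl⟩
    simp only [Pi.smul_apply, smul_eq_mul]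
    ring
  · intro h
    obtain ⟨i, hi⟩ := Function.ne_iff.mp hl
    refine ⟨m i / l i, funext fun j => ?_⟩
    rw [Pi.zero_apply] at hi
    rw [Pi.smul_apply, smul_eq_mul, div_mul_eq_mul_div, eq_div_iff hi]
    fin_cases i <;> fin_cases j <;> grind

theorem linear_formDvd_formMul_iff {l m n : Fin 2 → k} (hlm : formMul l m ≠ 0) :
    FormDvd n (formMul l m) ↔ FormDvd n l ∨ FormDvd n m := by
  refine ⟨fun h => ?_, Or.rec (·.trans (formDvd_formMul_left l m))
    (·.trans (formDvd_formMul_right l m))⟩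
  have hn := h.ne_zero hlm
  obtain ⟨s, hs⟩ := formDvd_iff_exists_eq_formMul.mp h
  simp only [formMul_linear_linear] at hs
  have h0 : l 0 * m 0 = n 0 * s 0 := congrFun hs 0
  have h1 : l 0 * m 1 + l 1 * m 0 = n 0 * s 1 + n 1 * s 0 := congrFun hs 1
  have h2 : l 1 * m 1 = n 1 * s 1 := congrFun hs 2
  rw [linear_formDvd_linear_iff hn, linear_formDvd_linear_iff hn, ← sub_eq_zero,
    ← sub_eq_zero (a := n 0 * m 1), ← mul_eq_zero]
  linear_combination n 1 ^ 2 * h0 - n 0 * n 1 * h1 + n 0 ^ 2 * h2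

theorem exists_formMul_eq_of_isSquare_disc (h2 : (2 : k) ≠ 0) {f : Fin 3 → k}
    (hf : IsSquare (disc f)) : ∃ l m : Fin 2 → k, f = formMul l m := by
  obtain ⟨s, hs⟩ := hf
  rw [disc] at hs
  simp only [formMul_linear_linear]
  by_cases h0 : f 0 = 0
  · refine ⟨![0, 1], ![f 1, f 2], ?_⟩
    ext i
    fin_cases i <;> simp [h0]
  -- `4 f₀ f = (2 f₀ x + (f₁ - s) y) (2 f₀ x + (f₁ + s) y)` when `s² = Disc f`.
  · refine ⟨![2 * f 0, f 1 - s], ![1 / 2, (f 1 + s) / (4 * f 0)], ?_⟩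
    have h4 : (4 : k) ≠ 0 := by
      rw [show (4 : k) = 2 * 2 by norm_num]
      exact mul_ne_zero h2 h2
    have hx : f 0 = 2 * f 0 * (1 / 2) := by field_simp
    have hxy : f 1 = 2 * f 0 * ((f 1 + s) / (4 * f 0)) + (f 1 - s) * (1 / 2) := by
      field_simp
      ring
    have hy : f 2 = (f 1 - s) * ((f 1 + s) / (4 * f 0)) := by
      field_simp
      linear_combination -hs
    ext i
    fin_cases i
    exacts [hx, hxy, hy]

end Discriminant

section Counting

variable {k : Type*} [Field k] [Fintype k] {a b n : ℕ}

open scoped Classical in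
theorem sum_formDvd_eq_sum_formMul {M : Type*} [AddCommMonoid M] {f : Fin (a + 1) → k}
    (hf : f ≠ 0) (F : (Fin (a + b + 1) → k) → M) :
    ∑ v with FormDvd f v, F v = ∑ c : Fin (b + 1) → k, F (formMul f c) := by
  have himage : univ.filter (FormDvd f) = univ.image (formMulBilin a b f) := by
    ext v
    simp only [mem_filter_univ, mem_image_univ_iff_mem_range, Set.mem_range,
      formDvd_iff_exists_eq_formMul, eq_comm (a := v)]
    rfl
  rw [himage, sum_image fun c _ c' _ h => formMulBilin_injective hf h]
  rfl

open scoped Classical in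
theorem card_formDvd_of_same_degree {g : Fin (n + 1) → k} (hg : g ≠ 0) :
    #{f : Fin (n + 1) → k | FormDvd f g} = Fintype.card k - 1 := by
  have hinj : Function.Injective fun c : kˣ => c • g :=
    fun _ _ h => Units.ext (smul_left_injective k hg h)
  have himage : ({f : Fin (n + 1) → k | FormDvd f g} : Finset _) =
      univ.image fun c : kˣ => c • g := by
    ext f
    simp only [mem_filter_univ, mem_image_univ_iff_mem_range, Set.mem_range,
      formDvd_iff_exists_units_smul hg, eq_comm (a := f)]
  rw [himage, card_image_of_injective _ hinj, card_univ, Fintype.card_units]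

open scoped Classical in
theorem card_linear_formDvd_quadratic [DecidableEq k] (h2 : (2 : k) ≠ 0) {f : Fin 3 → k}
    (hf : f ≠ 0) :
    #{l : Fin 2 → k | FormDvd l f} =
      (Fintype.card k - 1 : ℕ) * (1 + quadraticChar k (disc f)) := by
  by_cases hsq : IsSquare (disc f)
  · obtain ⟨l, m, rfl⟩ := exists_formMul_eq_of_isSquare_disc h2 hsq
    obtain ⟨hl, hm⟩ := formMul_ne_zero_iff.mp hf
    simp only [linear_formDvd_formMul_iff hf, filter_or, disc_formMul]
    by_cases hlm : FormDvd l m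
    · have hml (n : Fin 2 → k) : FormDvd n m ↔ FormDvd n l :=
        ⟨fun h => h.trans (hlm.symm hm), fun h => h.trans hlm⟩
      have hcross : l 0 * m 1 - l 1 * m 0 = 0 :=
        sub_eq_zero.mpr ((linear_formDvd_linear_iff hl).mp hlm)
      simp only [hml, union_self, card_formDvd_of_same_degree hl, hcross, zero_pow two_ne_zero,
        quadraticChar_zero, add_zero, mul_one]
    · have hdisj : Disjoint (univ.filter (FormDvd · l)) (univ.filter (FormDvd · m)) :=
        disjoint_filter.mpr fun n _ hnl hnm => hlm ((hnl.symm hl).trans hnm)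
      have hcross : l 0 * m 1 - l 1 * m 0 ≠ 0 :=
        sub_ne_zero.mpr ((linear_formDvd_linear_iff hl).not.mp hlm)
      rw [card_union_of_disjoint hdisj, card_formDvd_of_same_degree hl,
        card_formDvd_of_same_degree hm, quadraticChar_sq_one' hcross, Nat.cast_add]
      ring
  · have hempty : ({l | FormDvd l f} : Finset (Fin 2 → k)) = ∅ := by
      refine filter_false_of_mem fun l _ hl => hsq ?_
      obtain ⟨m, rfl⟩ := (formDvd_iff_exists_eq_formMul (a := 1) (b := 1)).mp hl
      exact disc_formMul l m ▸ IsSquare.sq _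
    rw [hempty, card_empty, quadraticChar_neg_one_iff_not_isSquare.mpr hsq, Nat.cast_zero,
      add_neg_cancel, mul_zero]

open scoped Classical in
theorem sum_quadraticChar_disc_formDvd_quadratic [DecidableEq k] {f : Fin 3 → k} (hf : f ≠ 0) :
    ∑ D : Fin 3 → k with FormDvd D f, quadraticChar k (disc D) =
      (Fintype.card k - 1 : ℕ) * quadraticChar k (disc f) := by
  rw [← card_formDvd_of_same_degree hf, ← nsmul_eq_mul]
  refine sum_eq_card_nsmul fun D hD => ?_
  obtain ⟨c, rfl⟩ := (formDvd_iff_exists_units_smul hf).mp (mem_filter_univ D |>.mp hD)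
  rw [Units.smul_def, disc_smul, map_mul, quadraticChar_sq_one' c.ne_zero, one_mul]

open scoped Classical in
theorem card_sub_sum_quadraticChar_formDvd [DecidableEq k] (h2 : (2 : k) ≠ 0) {d : ℕ} (hd : d ≤ 2)
    {r : Fin (d + 1) → k} (hr : r ≠ 0) :
    #{l : Fin 2 → k | FormDvd l r} -
        ∑ D : Fin 3 → k with FormDvd D r, quadraticChar k (disc D) =
      if 0 < d then ((Fintype.card k - 1 : ℕ) : ℤ) else 0 := by
  have hD (hd : d < 2) : ({D | FormDvd D r} : Finset (Fin 3 → k)) = ∅ :=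
    filter_false_of_mem fun D _ h => hd.not_ge h.le
  interval_cases d
  · have hl : ({l | FormDvd l r} : Finset (Fin 2 → k)) = ∅ :=
      filter_false_of_mem fun l _ h => zero_lt_one.not_ge h.le
    rw [hl, hD two_pos, sum_empty]
    simp
  · rw [card_formDvd_of_same_degree hr, hD one_lt_two, sum_empty, sub_zero, if_pos one_pos]
  · rw [card_linear_formDvd_quadratic h2 hr, sum_quadraticChar_disc_formDvd_quadratic hr,
      if_pos two_pos]
    ring

theorem quadraticChar_sum_sub_mul [DecidableEq k] (hk : ringChar k ≠ 2) {c : k} (hc : c ≠ 0)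
    (b : k) : ∑ x : k, quadraticChar k (b - c * x) = 0 := by
  rw [← quadraticChar_sum_zero hk]
  exact ((Equiv.mulLeft₀ c hc).trans (Equiv.subLeft b)).sum_comp (quadraticChar k)

theorem sum_quadraticChar_disc [DecidableEq k] (hk : ringChar k ≠ 2) :
    ∑ f : Fin 3 → k, quadraticChar k (disc f) = Fintype.card k * (Fintype.card k - 1 : ℕ) := by
  have h4 : (4 : k) ≠ 0 := by
    rw [show (4 : k) = 2 * 2 by norm_num]
    exact mul_self_ne_zero.mpr (Ring.two_ne_zero hk)
  have hsum : ∑ f : Fin 3 → k, quadraticChar k (disc f) =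
      ∑ a : k, ∑ b : k, ∑ c : k, quadraticChar k (b ^ 2 - 4 * a * c) := by
    let e : (Fin 3 → k) ≃ k × k × k :=
      ⟨fun f => (f 0, f 1, f 2), fun t => ![t.1, t.2.1, t.2.2],
        fun f => by ext i; fin_cases i <;> rfl, fun _ => rfl⟩
    rw [← e.symm.sum_comp, Fintype.sum_prod_type]
    exact sum_congr rfl fun a _ => Fintype.sum_prod_type _
  have hsq (b : k) : quadraticChar k (b ^ 2) = if b ≠ 0 then 1 else 0 := by
    split_ifs with hb
    · exact quadraticChar_sq_one' hb
    · rw [not_not.mp hb, zero_pow two_ne_zero, quadraticChar_zero]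
  rw [hsum, Fintype.sum_eq_single 0 fun a ha => sum_eq_zero fun b _ =>
    quadraticChar_sum_sub_mul hk (mul_ne_zero h4 ha) _]
  simp only [mul_zero, zero_mul, sub_zero, hsq, sum_const, card_univ, nsmul_eq_mul]
  rw [← mul_sum, sum_boole, filter_ne', card_erase_of_mem (mem_univ _), card_univ]

open scoped Classical in
theorem card_sub_sum_quadraticChar_of_ne_zero [DecidableEq k] (h2 : (2 : k) ≠ 0) {v : Fin 6 → k}
    (hv : v ≠ 0) :
    #{l : Fin 2 → k | FormDvd (formMul l l) v} -
        ∑ D : Fin 3 → k with FormDvd (formMul D D) v, quadraticChar k (disc D) =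
      if IsSingularQuintic v then ((Fintype.card k - 1 : ℕ) : ℤ) else 0 := by
  obtain ⟨d, r, hd, hr, hdvd⟩ := exists_forall_formMul_self_dvd_iff hv
  have hsing : IsSingularQuintic v ↔ 0 < d := by
    simp only [isSingularQuintic_iff_exists_formMul_self_dvd hv, hdvd]
    exact ⟨fun ⟨a, ha, f, hf⟩ => ha.trans_le hf.le, fun hd => ⟨d, hd, r, formDvd_refl r⟩⟩
  simp only [hdvd, hsing]
  exact card_sub_sum_quadraticChar_formDvd h2 (by omega) hr

open scoped Classical in
theorem card_sub_sum_quadraticChar_formMul_self_dvd [DecidableEq k] (hk : ringChar k ≠ 2)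
    (v : Fin 6 → k) :
    #{l : Fin 2 → k | l ≠ 0 ∧ FormDvd (formMul l l) v} -
        ∑ D : Fin 3 → k with FormDvd (formMul D D) v, quadraticChar k (disc D) =
      if v = 0 ∨ IsSingularQuintic v then ((Fintype.card k - 1 : ℕ) : ℤ) else 0 := by
  rcases eq_or_ne v 0 with rfl | hv
  · have hl (l : Fin 2 → k) : FormDvd (formMul l l) (0 : Fin 6 → k) :=
      formDvd_zero_right _ (by norm_num)
    have hD (D : Fin 3 → k) : FormDvd (formMul D D) (0 : Fin 6 → k) :=
      formDvd_zero_right _ (by norm_num)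
    simp only [hl, hD, and_true, filter_true, true_or, if_true, sum_quadraticChar_disc hk,
      filter_ne', card_erase_of_mem (mem_univ _), card_univ, Fintype.card_fun, Fintype.card_fin,
      Nat.cast_sub Fintype.card_pos, Nat.cast_sub (Nat.one_le_pow 2 _ Fintype.card_pos)]
    push_cast
    ring
  · have hl (l : Fin 2 → k) : l ≠ 0 ∧ FormDvd (formMul l l) v ↔ FormDvd (formMul l l) v :=
      and_iff_right_of_imp fun h => (formMul_ne_zero_iff.mp (h.ne_zero hv)).1
    simp only [hl, hv, false_or]
    exact card_sub_sum_quadraticChar_of_ne_zero (Ring.two_ne_zero hk) hv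

end Counting

section Apolarity

section CommRing

variable {k : Type*} [CommRing k] {a b c m n : ℕ}

/-- The binary form `f` of degree `a` is apolar to `w`, a functional on forms of degree `a + b`. -/
def IsApolar (f : Fin (a + 1) → k) (w : Fin (a + b + 1) → k) : Prop :=
  ∀ h : Fin (b + 1) → k, pair w (formMul f h) = 0

theorem pair_comp_cast (h : m + 1 = n + 1) (w : Fin (m + 1) → k) (v : Fin (n + 1) → k) :
    pair w (v ∘ Fin.cast h) = pair (w ∘ Fin.cast h.symm) v :=
  Fintype.sum_equiv (finCongr h) _ _ fun _ => rfl

theorem IsApolar.formMul_right {f : Fin (a + 1) → k} {w : Fin (a + b + c + 1) → k}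
    (hf : IsApolar (b := b + c) f (w ∘ Fin.cast (by omega))) (g : Fin (b + 1) → k) :
    IsApolar (formMul f g) w := fun h => by
  rw [formMul_assoc, pair_comp_cast]
  exact hf (formMul g h)

/-- The bilinear form `(f, h) ↦ (w, f h)` on forms of degrees `a` and `b` attached to a functional
`w` on forms of degree `a + b`, that is, the catalecticant of `w`. -/
def catalecticant (w : Fin (a + b + 1) → k) :
    (Fin (a + 1) → k) →ₗ[k] (Fin (b + 1) → k) →ₗ[k] k :=
  (formMulBilin a b).compr₂ (dotProductBilin k k w)

theorem catalecticant_apply (w : Fin (a + b + 1) → k) (f : Fin (a + 1) → k)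
    (h : Fin (b + 1) → k) : catalecticant w f h = pair w (formMul f h) :=
  rfl

theorem isApolar_iff_catalecticant_eq_zero {f : Fin (a + 1) → k} {w : Fin (a + b + 1) → k} :
    IsApolar f w ↔ catalecticant w f = 0 :=
  (LinearMap.ext_iff (f := catalecticant w f) (g := 0)).symm

end CommRing

variable {k : Type*} [Field k] {b m n : ℕ}

theorem exists_formMul_eq_of_isApolar {f : Fin (b + 1 + 1) → k} {w : Fin (b + 1 + m + b + 1) → k}
    (hf : f ≠ 0) (hfw : ∀ s : Fin (m + 1) → k, IsApolar (formMul f s) w)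
    (hw : Function.Injective (catalecticant (a := b + 1 + m) (b := b) w).flip)
    {g : Fin (b + 1 + m + 1) → k} (hg : IsApolar g w) :
    ∃ s : Fin (m + 1) → k, formMul f s = g := by
  have hrange : LinearMap.range (formMulBilin (b + 1) m f) ≤
      LinearMap.ker (catalecticant (a := b + 1 + m) (b := b) w) := by
    rintro _ ⟨s, rfl⟩
    exact isApolar_iff_catalecticant_eq_zero.mp (hfw s)
  have hrange_dim := LinearMap.finrank_range_of_inj (formMulBilin_injective (b := m) hf)
  have hsurj := LinearMap.range_eq_top.mpr (LinearMap.flip_injective_iff₁.mp hw)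
  have hker_dim := LinearMap.finrank_range_add_finrank_ker
    (catalecticant (a := b + 1 + m) (b := b) w)
  rw [hsurj, finrank_top, Subspace.dual_finrank_eq] at hker_dim
  simp only [Module.finrank_fin_fun] at hrange_dim hker_dim
  have heq := Submodule.eq_of_le_of_finrank_eq hrange (by omega)
  exact heq.ge (isApolar_iff_catalecticant_eq_zero.mp hg)

theorem not_formMul_self_dvd_of_disc_ne_zero {q : Fin 3 → k} (hq : disc q ≠ 0) (l : Fin 2 → k) :
    ¬ FormDvd (formMul l l) q := by
  intro h
  obtain ⟨c, rfl⟩ := (formDvd_iff_exists_smul (n := 2)).mp h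
  apply hq
  rw [disc_smul, disc_formMul, mul_comm (l 0), sub_self, zero_pow two_ne_zero, mul_zero]

theorem ne_zero_of_disc_ne_zero {q : Fin 3 → k} (hq : disc q ≠ 0) : q ≠ 0 := by
  rintro rfl
  exact hq (by simp [disc])

theorem squarefree_dehomog_of_disc_ne_zero {q : Fin 3 → k} (hq : disc q ≠ 0) :
    Squarefree (dehomog q) := fun t ht => by
  have hq0 := ne_zero_of_disc_ne_zero hq
  have ht0 : t ≠ 0 := left_ne_zero_of_mul (ne_zero_of_dvd_ne_zero
    (dehomog_eq_zero_iff.not.mpr hq0) ht)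
  have hdeg := natDegree_le_of_dvd ht (dehomog_eq_zero_iff.not.mpr hq0)
  have hqdeg := natDegree_dehomog_le q
  rw [natDegree_mul ht0 ht0] at hdeg
  by_contra hunit
  have ht1 : 0 < t.natDegree :=
    natDegree_pos_iff_degree_pos.mpr (degree_pos_of_ne_zero_of_nonunit ht0 hunit)
  refine not_formMul_self_dvd_of_disc_ne_zero hq (toFn 2 t) ?_
  rw [formDvd_iff_dehomog_dvd hq0, dehomog_formMul, dehomog_toFn (by omega),
    natDegree_mul ht0 ht0]
  exact ⟨ht, by omega⟩

theorem natDegree_dehomog_pos_of_disc_ne_zero {q : Fin 3 → k} (hq : disc q ≠ 0) :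
    0 < (dehomog q).natDegree := by
  by_contra! hdeg
  refine not_formMul_self_dvd_of_disc_ne_zero hq ![1, 0] ?_
  rw [formDvd_iff_dehomog_dvd (ne_zero_of_disc_ne_zero hq), dehomog_formMul, dehomog_x, mul_one,
    natDegree_one]
  exact ⟨one_dvd _, by omega⟩

theorem formDvd_of_formDvd_formMul_self {q : Fin 3 → k} (hq : disc q ≠ 0) {D : Fin (n + 1) → k}
    (hD : D ≠ 0) (h : FormDvd q (formMul D D)) : FormDvd q D := by
  rw [formDvd_iff_dehomog_dvd (formMul_ne_zero_iff.mpr ⟨hD, hD⟩), dehomog_formMul, ← sq,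
    (squarefree_dehomog_of_disc_ne_zero hq).dvd_pow_iff_dvd two_ne_zero, natDegree_pow] at h
  have hpos := natDegree_dehomog_pos_of_disc_ne_zero hq
  exact (formDvd_iff_dehomog_dvd hD).mpr ⟨h.1, by omega⟩

theorem isApolar_formMul_self_iff {w : Fin 6 → k}
    (hw : ∀ l : Fin 2 → k, l ≠ 0 → ¬ IsApolar (b := 3) (formMul l l) w) {q : Fin 3 → k}
    (hqw : IsApolar (b := 3) q w) (hq : disc q ≠ 0) {D : Fin 3 → k} (hD : D ≠ 0) :
    IsApolar (b := 1) (formMul D D) w ↔ FormDvd D q := by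
  have hq0 := ne_zero_of_disc_ne_zero hq
  have hmul (s : Fin 3 → k) : IsApolar (b := 1) (formMul q s) w :=
    IsApolar.formMul_right (a := 2) (b := 2) (c := 1) hqw s
  constructor
  · intro hDw
    have hinj : Function.Injective (catalecticant (a := 4) (b := 1) w).flip := by
      refine (injective_iff_map_eq_zero _).mpr fun l hl => by_contra fun hl0 => hw l hl0 fun h => ?_
      exact (congrArg (pair w) (formMul_right_comm l l h)).trans
        (LinearMap.congr_fun hl (formMul l h))
    obtain ⟨s, hs⟩ := exists_formMul_eq_of_isApolar (b := 1) (m := 2) hq0 hmul hinj hDw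
    exact (formDvd_of_formDvd_formMul_self hq hD (hs ▸ formDvd_formMul_left q s)).symm hD
  · intro hDq
    have hdvd := (hDq.symm hq0).trans (formDvd_formMul_left D D)
    obtain ⟨s, hs⟩ := (formDvd_iff_exists_eq_formMul (a := 2) (b := 2)).mp hdvd
    exact hs ▸ hmul s

end Apolarity

section CharacterSums

variable {k R : Type*} [Field k] [Fintype k] [CommRing R] {a b : ℕ}

open scoped Classical in
theorem sum_addChar_formDvd [IsDomain R] {ψ : AddChar k R} (hψ : ψ ≠ 1) {f : Fin (a + 1) → k}
    (hf : f ≠ 0) (w : Fin (a + b + 1) → k) :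
    ∑ v with FormDvd f v, ψ (pair w v) =
      if IsApolar f w then (Fintype.card k : R) ^ (b + 1) else 0 := by
  have htriv : ψ.compAddMonoidHom (catalecticant w f).toAddMonoidHom = 0 ↔ IsApolar f w := by
    refine ⟨fun h0 h => by_contra fun ht => hψ (AddChar.ext _ _ fun x => ?_), fun h0 => ?_⟩
    · have hx := DFunLike.congr_fun h0 ((x / pair w (formMul f h)) • h)
      rw [AddChar.compAddMonoidHom_apply, LinearMap.toAddMonoidHom_coe, map_smul,
        catalecticant_apply, smul_eq_mul, div_mul_cancel₀ x ht] at hx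
      exact hx
    · ext h
      rw [AddChar.compAddMonoidHom_apply, LinearMap.toAddMonoidHom_coe, catalecticant_apply, h0,
        AddChar.map_zero_eq_one, AddChar.zero_apply]
  have hsum := AddChar.sum_eq_ite (ψ.compAddMonoidHom (catalecticant w f).toAddMonoidHom)
  rw [sum_formDvd_eq_sum_formMul hf]
  simp only [htriv, Fintype.card_fun, Fintype.card_fin, Nat.cast_pow] at hsum
  exact hsum

variable [DecidableEq k]

open scoped Classical in
/-- The sum `S(w) = ∑ ψ((w, v))` over the binary quintic forms `v` that are zero or singular, for an
additive character `ψ` of a finite field. -/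
noncomputable def singularCharSum (ψ : AddChar k R) (w : Fin 6 → k) : R :=
  ∑ v with v = 0 ∨ IsSingularQuintic v, ψ (pair w v)

open scoped Classical in
theorem card_sub_one_mul_singularCharSum (hk : ringChar k ≠ 2) (ψ : AddChar k R) (w : Fin 6 → k) :
    ((Fintype.card k - 1 : ℕ) : R) * singularCharSum ψ w =
      ∑ l : Fin 2 → k with l ≠ 0, ∑ v with FormDvd (formMul l l) v, ψ (pair w v) -
        ∑ D : Fin 3 → k, (quadraticChar k (disc D) : R) *
          ∑ v with FormDvd (formMul D D) v, ψ (pair w v) := by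
  have hcoeff (v : Fin 6 → k) : (if v = 0 ∨ IsSingularQuintic v then
        ((Fintype.card k - 1 : ℕ) : R) * ψ (pair w v) else 0) =
      (∑ l : Fin 2 → k with l ≠ 0, if FormDvd (formMul l l) v then ψ (pair w v) else 0) -
        ∑ D : Fin 3 → k, quadraticChar k (disc D) *
          if FormDvd (formMul D D) v then ψ (pair w v) else 0 := by
    have hv := congrArg (fun x : ℤ => (x : R) * ψ (pair w v))
      (card_sub_sum_quadraticChar_formMul_self_dvd hk v)
    simp only [← filter_filter, Int.cast_sub, Int.cast_sum, Int.cast_natCast, sub_mul, sum_mul,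
      Int.cast_ite, ite_mul, Int.cast_zero, zero_mul] at hv
    simp only [← hv, ← sum_filter, sum_const, nsmul_eq_mul, mul_ite, mul_zero]
  rw [singularCharSum, mul_sum, sum_filter, sum_congr rfl fun v _ => hcoeff v, sum_sub_distrib]
  congr 1
  · rw [sum_comm]
    exact sum_congr rfl fun l _ => (sum_filter _ _).symm
  · rw [sum_comm]
    exact sum_congr rfl fun D _ => by rw [← mul_sum, ← sum_filter]

theorem singularCharSum_eq [IsDomain R] [CharZero R] (hk : ringChar k ≠ 2) {ψ : AddChar k R}
    (hψ : ψ ≠ 1) {w : Fin 6 → k}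
    (hw : ∀ l : Fin 2 → k, l ≠ 0 → ¬ IsApolar (b := 3) (formMul l l) w)
    {q : Fin 3 → k} (hqw : IsApolar (b := 3) q w) (hq : disc q ≠ 0) :
    singularCharSum ψ w = -(quadraticChar k (disc q) : R) * (Fintype.card k : R) ^ 2 := by
  classical
  have hlinear (l : Fin 2 → k) (hl : l ≠ 0) :
      ∑ v with FormDvd (formMul l l) v, ψ (pair w v) = 0 := by
    have hsum := sum_addChar_formDvd (b := 3) hψ (formMul_ne_zero_iff.mpr ⟨hl, hl⟩) w
    exact hsum.trans (if_neg (hw l hl))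
  have hquadratic (D : Fin 3 → k) : (quadraticChar k (disc D) : R) *
      ∑ v with FormDvd (formMul D D) v, ψ (pair w v) =
        if FormDvd D q then (quadraticChar k (disc D) : R) * (Fintype.card k : R) ^ 2 else 0 := by
    rcases eq_or_ne D 0 with rfl | hD
    · have hdisc : disc (0 : Fin 3 → k) = 0 := by simp [disc]
      simp only [hdisc, quadraticChar_zero, Int.cast_zero, zero_mul, ite_self]
    · have hsum := sum_addChar_formDvd (b := 1) hψ (formMul_ne_zero_iff.mpr ⟨hD, hD⟩) w
      simp only [isApolar_formMul_self_iff hw hqw hq hD] at hsum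
      rw [← mul_ite_zero]
      exact congrArg _ hsum
  have hcard : ((Fintype.card k - 1 : ℕ) : R) ≠ 0 :=
    Nat.cast_ne_zero.mpr (Nat.sub_ne_zero_of_lt Fintype.one_lt_card)
  refine mul_left_cancel₀ hcard ?_
  calc ((Fintype.card k - 1 : ℕ) : R) * singularCharSum ψ w
      = -((∑ D : Fin 3 → k with FormDvd D q, quadraticChar k (disc D) : ℤ) : R) *
          (Fintype.card k : R) ^ 2 := by
        rw [card_sub_one_mul_singularCharSum hk,
          sum_eq_zero fun l hl => hlinear l (mem_filter_univ l |>.mp hl)]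
        simp only [hquadratic, zero_sub, ← sum_filter, ← sum_mul, Int.cast_sum, neg_mul]
    _ = _ := by
        rw [sum_quadraticChar_disc_formDvd_quadratic (ne_zero_of_disc_ne_zero hq)]
        push_cast
        ring

theorem stmt16_general [IsDomain R] [CharZero R] (hk : ringChar k ≠ 2) {ψ : AddChar k R}
    (hψ : ψ ≠ 1) (w : Fin 6 → k)
    (h1 : ¬ ∃ l : Fin 2 → k, l ≠ 0 ∧ IsApolar (b := 3) (formMul l l) w)
    (q : Fin 3 → k) (hap : IsApolar (b := 3) q w) (hd : disc q ≠ 0) :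
    singularCharSum ψ w = -(quadraticChar k (disc q) : R) * (Fintype.card k : R) ^ 2 ∧
    ((∃ (l1 l2 : Fin 2 → k), l1 ≠ 0 ∧ l2 ≠ 0 ∧ q = formMul l1 l2 ∧
        ¬ ∃ c : k, l2 = c • l1) → singularCharSum ψ w = -(Fintype.card k : R) ^ 2) ∧
    ((¬ ∃ (l1 l2 : Fin 2 → k), l1 ≠ 0 ∧ l2 ≠ 0 ∧ q = formMul l1 l2) →
        singularCharSum ψ w = (Fintype.card k : R) ^ 2) := by
  have hsum := singularCharSum_eq hk hψ (fun l hl hlw => h1 ⟨l, hl, hlw⟩) hap hd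
  refine ⟨hsum, ?_, fun hirr => ?_⟩
  · rintro ⟨l, m, -, -, rfl, -⟩
    rw [disc_formMul] at hd hsum
    rw [hsum, quadraticChar_sq_one' (ne_zero_pow two_ne_zero hd), Int.cast_one, neg_one_mul]
  · have hsq : ¬ IsSquare (disc q) := fun hsq => by
      obtain ⟨l, m, rfl⟩ := exists_formMul_eq_of_isSquare_disc (Ring.two_ne_zero hk) hsq
      obtain ⟨hl, hm⟩ := formMul_ne_zero_iff.mp (ne_zero_of_disc_ne_zero hd)
      exact hirr ⟨l, m, hl, hm, rfl⟩
    rw [hsum, quadraticChar_neg_one_iff_not_isSquare.mpr hsq, Int.cast_neg, Int.cast_one, neg_neg,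
      one_mul]

end CharacterSums

theorem expSum_eq_singularCharSum (p : ℕ) [Fact p.Prime] (w : Fin 6 → ZMod p) :
    expSum p w = singularCharSum ZMod.stdAddChar w := by
  rw [expSum, singularCharSum, sum_filter]
  simp only [ZMod.stdAddChar_apply, ZMod.toCircle_apply]

/-- Let `p` be an odd prime, suppose no square of a nonzero linear form over `𝔽_p` is
apolar to `w`, and let `q` be a nonzero binary quadratic form apolar to `w` with
`Disc(q) ≠ 0` (Waring type `⟨1,1⟩` or `⟨2⟩`). Then `S(w) = -χ(Disc q)·p²`; in
particular `S(w) = -p²` if `q` splits into two non-proportional linear factors over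
`𝔽_p`, and `S(w) = p²` if `q` is irreducible over `𝔽_p`. -/
theorem stmt16 (p : ℕ) [Fact p.Prime] (hp : p ≠ 2) (w : Fin 6 → ZMod p)
    (h1 : ¬ ∃ l : Fin 2 → ZMod p, l ≠ 0 ∧
      ∀ h : Fin 4 → ZMod p, pair w (formMul (formMul l l) h) = 0)
    (q : Fin 3 → ZMod p) (hq : q ≠ 0)
    (hap : ∀ h : Fin 4 → ZMod p, pair w (formMul q h) = 0)
    (hd : disc q ≠ 0) :
    expSum p w = -(quadraticChar (ZMod p) (disc q) : ℂ) * (p : ℂ) ^ 2 ∧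
    ((∃ (l1 l2 : Fin 2 → ZMod p), l1 ≠ 0 ∧ l2 ≠ 0 ∧ q = formMul l1 l2 ∧
        ¬ ∃ c : ZMod p, l2 = c • l1) → expSum p w = -(p : ℂ) ^ 2) ∧
    ((¬ ∃ (l1 l2 : Fin 2 → ZMod p), l1 ≠ 0 ∧ l2 ≠ 0 ∧ q = formMul l1 l2) →
        expSum p w = (p : ℂ) ^ 2) := by
  have hψ : ZMod.stdAddChar (N := p) ≠ 1 := fun h => zero_ne_one <|
    ZMod.injective_stdAddChar (DFunLike.congr_fun h 0 |>.trans (DFunLike.congr_fun h 1).symm)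
  rw [expSum_eq_singularCharSum]
  simpa only [ZMod.card] using stmt16_general (by rwa [ZMod.ringChar_zmod_n]) hψ w h1 q hap hd
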